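/- arXiv:2106.07050 — 2 statements merged into one kernel-verified Lean document; each statement's English description precedes it below -/
import Mathlib

section
/- For every d ≥ 1 and λ > 0 there exists a constant C > 0, depending only on φ and λ, such that for all R > 0 and all (t,x) ∈ Q_R the estimate |∂_t² φ_R(t,x)| ≤ C R^{−4} (φ_R^*(t,x))^{λ/(λ+2)} holds. -/
open MeasureTheory Real Set

noncomputable section

/-- The Laplacian of a function on `ℝ^d`, as the sum of second partial derivatives. -/
def lap {d : ℕ} (f : EuclideanSpace ℝ (Fin d) → ℝ) (x : EuclideanSpace ℝ (Fin d)) : ℝ :=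
  ∑ i : Fin d, iteratedFDeriv ℝ 2 f x ![EuclideanSpace.single i 1, EuclideanSpace.single i 1]

/-- The harmonic weight function `Ψ`. -/
def Psi (d : ℕ) (α β : ℝ) (x : EuclideanSpace ℝ (Fin d)) : ℝ :=
  if β = 0 then 1
  else if d = 2 then Real.log ‖x‖ + α / β
  else 1 - ‖x‖ ^ ((2 : ℝ) - d) + (α / β) * ((d : ℝ) - 2)

/-- `φ*`: the modification of the cutoff `φ` vanishing on `[0, 1/2)`. -/
def phiStar (φ : ℝ → ℝ) (ρ : ℝ) : ℝ := if ρ < 1 / 2 then 0 else φ ρ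

/-- The standing assumptions on the cutoff function `φ`: smooth, `0 ≤ φ ≤ 1`, `φ ≡ 1` on
`[0,1/2]`, decreasing on `(1/2, 1)` and `φ ≡ 0` on `[1, ∞)`. -/
def CutoffHyp (φ : ℝ → ℝ) : Prop :=
  ContDiff ℝ (⊤ : ℕ∞) φ ∧ (∀ ρ, 0 ≤ φ ρ ∧ φ ρ ≤ 1) ∧ (∀ ρ ∈ Icc (0 : ℝ) (1 / 2), φ ρ = 1) ∧
  AntitoneOn φ (Ioo (1 / 2 : ℝ) 1) ∧ ∀ ρ, (1 : ℝ) ≤ ρ → φ ρ = 0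

/-- `φ_R(t,x) = (φ((t² + (|x|-1)⁴)/R⁴))^{λ+2}`. -/
def phiR {d : ℕ} (φ : ℝ → ℝ) (lam R t : ℝ) (x : EuclideanSpace ℝ (Fin d)) : ℝ :=
  φ ((t ^ 2 + (‖x‖ - 1) ^ 4) / R ^ 4) ^ (lam + 2)

/-- `φ_R^*(t,x) = (φ*((t² + (|x|-1)⁴)/R⁴))^{λ+2}`. -/
def phiRStar {d : ℕ} (φ : ℝ → ℝ) (lam R t : ℝ) (x : EuclideanSpace ℝ (Fin d)) : ℝ :=
  phiStar φ ((t ^ 2 + (‖x‖ - 1) ^ 4) / R ^ 4) ^ (lam + 2)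

theorem phiR_deriv_tt_est (d : ℕ) (hd : 1 ≤ d) (lam : ℝ) (hlam : 0 < lam)
    (φ : ℝ → ℝ) (hφ : CutoffHyp φ) :
    ∃ C > (0 : ℝ), ∀ R > (0 : ℝ), ∀ (t : ℝ) (x : EuclideanSpace ℝ (Fin d)),
      0 < t → 1 < ‖x‖ → t ^ 2 + (‖x‖ - 1) ^ 4 < R ^ 4 →
      |deriv (fun s => deriv (fun r => phiR φ lam R r x) s) t|
        ≤ C * R ^ (-4 : ℝ) * phiRStar φ lam R t x ^ (lam / (lam + 2)) := by
  obtain ⟨hsm, h01, h1, -, -⟩ := hφ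
  have hsm' : ContDiff ℝ (⊤ : ℕ∞) (deriv φ) := (contDiff_infty_iff_deriv.1 hsm).2
  have hsm'' : ContDiff ℝ (⊤ : ℕ∞) (deriv (deriv φ)) := (contDiff_infty_iff_deriv.1 hsm').2
  have hd1 : ∀ y, HasDerivAt φ (deriv φ y) y := fun y =>
    ((contDiff_infty_iff_deriv.1 hsm).1 y).hasDerivAt
  have hd2 : ∀ y, HasDerivAt (deriv φ) (deriv (deriv φ) y) y := fun y =>
    ((contDiff_infty_iff_deriv.1 hsm').1 y).hasDerivAt
  obtain ⟨M1, hM1⟩ := (isCompact_Icc (a := (0:ℝ)) (b := 1)).exists_bound_of_continuousOn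
    hsm'.continuous.continuousOn
  obtain ⟨M2, hM2⟩ := (isCompact_Icc (a := (0:ℝ)) (b := 1)).exists_bound_of_continuousOn
    hsm''.continuous.continuousOn
  have hM1p : 0 ≤ M1 := (norm_nonneg _).trans (hM1 0 (by simp))
  have hM2p : 0 ≤ M2 := (norm_nonneg _).trans (hM2 0 (by simp))
  refine ⟨(lam + 2) * (4 * M2 + 2 * M1 + 4 * M1 ^ 2 * (lam + 1)) + 1, by positivity, ?_⟩
  intro R hR t x ht hx hQ
  set a := (‖x‖ - 1) ^ 4 with ha
  have ha0 : 0 < a := by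
    have : 0 < ‖x‖ - 1 := by linarith
    positivity
  have hg : ∀ s : ℝ, HasDerivAt (fun s : ℝ => (s ^ 2 + a) / R ^ 4) (2 * s / R ^ 4) s := by
    intro s
    have := (((hasDerivAt_id s).pow 2).add_const a).div_const (R ^ 4)
    simpa using this
  have hdd1 : ∀ s : ℝ, HasDerivAt (fun r => phiR φ lam R r x)
      ((deriv φ ((s ^ 2 + a) / R ^ 4) * (2 * s / R ^ 4)) * (lam + 2) *
        φ ((s ^ 2 + a) / R ^ 4) ^ (lam + 1)) s := by
    intro s
    have h := ((hd1 ((s ^ 2 + a) / R ^ 4)).comp s (hg s)).rpow_const (p := lam + 2)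
      (Or.inr (by linarith))
    rw [show lam + 2 - 1 = lam + 1 by ring] at h
    exact h
  have hfun : (fun s => deriv (fun r => phiR φ lam R r x) s) = fun s =>
      ((deriv φ ((s ^ 2 + a) / R ^ 4) * (2 * s / R ^ 4)) * (lam + 2) *
        φ ((s ^ 2 + a) / R ^ 4) ^ (lam + 1)) := funext fun s => (hdd1 s).deriv
  have hlin : HasDerivAt (fun s : ℝ => 2 * s / R ^ 4) (2 / R ^ 4) t := by
    simpa using ((hasDerivAt_id t).const_mul 2).div_const (R ^ 4)
  have hpow : HasDerivAt (fun s => φ ((s ^ 2 + a) / R ^ 4) ^ (lam + 1))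
      (deriv φ ((t ^ 2 + a) / R ^ 4) * (2 * t / R ^ 4) * (lam + 1) *
        φ ((t ^ 2 + a) / R ^ 4) ^ lam) t := by
    have h := ((hd1 ((t ^ 2 + a) / R ^ 4)).comp t (hg t)).rpow_const (p := lam + 1)
      (Or.inr (by linarith))
    rw [show lam + 1 - 1 = lam by ring] at h
    exact h
  have hsec := (((((hd2 ((t ^ 2 + a) / R ^ 4)).comp t (hg t)).mul hlin).mul_const
    (lam + 2)).mul hpow).deriv
  have hR4 : (0:ℝ) < R ^ 4 := by positivity
  have hRm : R ^ (-4 : ℝ) = 1 / R ^ 4 := by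
    rw [Real.rpow_neg hR.le, one_div]; norm_cast
  rw [hfun]
  refine (congrArg abs hsec).trans_le ?_
  simp only [Function.comp, Pi.mul_apply]
  have hy0 : 0 < (t ^ 2 + a) / R ^ 4 := by positivity
  have hy1 : (t ^ 2 + a) / R ^ 4 < 1 := (div_lt_one hR4).2 hQ
  have hstar : phiRStar φ lam R t x = phiStar φ ((t ^ 2 + a) / R ^ 4) ^ (lam + 2) := rfl
  rw [hstar, hRm]
  have hk2 : (2 * t / R ^ 4) ^ 2 ≤ 4 * (1 / R ^ 4) := by
    rw [div_pow, mul_one_div, div_le_div_iff₀ (by positivity) hR4]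
    have : t ^ 2 ≤ R ^ 4 := by linarith
    nlinarith [mul_le_mul_of_nonneg_right this (sq_nonneg (R^4)), mul_le_mul_of_nonneg_right this hR4.le]
  generalize (t ^ 2 + a) / R ^ 4 = y at *
  rw [show 2 / R ^ 4 = 2 * (1 / R ^ 4) by ring]
  have hq : 0 < 1 / R ^ 4 := by positivity
  generalize 1 / R ^ 4 = q at *
  generalize 2 * t / R ^ 4 = k at *
  unfold phiStar
  split_ifs with hy
  · have e0 : ∀ z ∈ Ioo (0:ℝ) (1/2), deriv φ z = 0 := by
      intro z hz
      have : φ =ᶠ[nhds z] fun _ => (1:ℝ) := by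
        filter_upwards [isOpen_Ioo.mem_nhds hz] with w hw using h1 w ⟨hw.1.le, hw.2.le⟩
      rw [this.deriv_eq]; simp
    have e1 : deriv (deriv φ) y = 0 := by
      have : deriv φ =ᶠ[nhds y] fun _ => (0:ℝ) := by
        filter_upwards [isOpen_Ioo.mem_nhds (⟨hy0, hy⟩ : y ∈ Ioo (0:ℝ) (1/2))] with w hw using e0 w hw
      rw [this.deriv_eq]; simp
    rw [e0 y ⟨hy0, hy⟩, e1]
    rw [Real.zero_rpow (by positivity), Real.zero_rpow (by positivity)]
    simp
  · rw [← Real.rpow_mul (h01 y).1, mul_div_cancel₀ _ (by positivity)]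
    have hP1 : φ y ^ (lam + 1) ≤ φ y ^ lam :=
      Real.rpow_le_rpow_of_exponent_ge_of_imp (h01 y).1 (h01 y).2 (by linarith)
        (fun _ h => by linarith)
    have hP1' : 0 ≤ φ y ^ (lam + 1) := Real.rpow_nonneg (h01 y).1 _
    have hP0 : 0 ≤ φ y ^ lam := Real.rpow_nonneg (h01 y).1 _
    have b1 := hM1 y ⟨hy0.le, hy1.le⟩
    have b2 := hM2 y ⟨hy0.le, hy1.le⟩
    rw [Real.norm_eq_abs] at b1 b2
    generalize φ y ^ (lam + 1) = P1 at *
    generalize φ y ^ lam = P at *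
    generalize deriv (deriv φ) y = D2 at *
    generalize deriv φ y = D1 at *
    have t1 : |D2 * k ^ 2 * P1| ≤ M2 * (4 * q) * P := by
      rw [abs_mul, abs_mul, abs_of_nonneg hP1', abs_of_nonneg (sq_nonneg k)]
      gcongr
    have t2 : |D1 * (2 * q) * P1| ≤ M1 * (2 * q) * P := by
      rw [abs_mul, abs_mul, abs_of_nonneg hP1', abs_of_nonneg (by positivity : 0 ≤ 2 * q)]
      gcongr
    have t3 : |D1 ^ 2 * k ^ 2 * P| ≤ M1 ^ 2 * (4 * q) * P := by
      rw [abs_mul, abs_mul, abs_of_nonneg hP0, abs_of_nonneg (sq_nonneg k), abs_pow]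
      gcongr
    calc _ = |(lam + 2) * (D2 * k ^ 2 * P1 + D1 * (2 * q) * P1
              + (lam + 1) * (D1 ^ 2 * k ^ 2 * P))| := by congr 1; ring
      _ = (lam + 2) * |D2 * k ^ 2 * P1 + D1 * (2 * q) * P1
              + (lam + 1) * (D1 ^ 2 * k ^ 2 * P)| := by
            rw [abs_mul, abs_of_pos (by linarith : 0 < lam + 2)]
      _ ≤ (lam + 2) * (|D2 * k ^ 2 * P1| + |D1 * (2 * q) * P1|
              + (lam + 1) * |D1 ^ 2 * k ^ 2 * P|) := by
            gcongr
            refine (abs_add_three _ _ _).trans_eq ?_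
            rw [abs_mul (lam + 1), abs_of_pos (by linarith : 0 < lam + 1)]
      _ ≤ (lam + 2) * (M2 * (4 * q) * P + M1 * (2 * q) * P
              + (lam + 1) * (M1 ^ 2 * (4 * q) * P)) := by gcongr
      _ ≤ _ := by
            have : 0 ≤ q * P := by positivity
            linarith
end
end

section
/- For every d ≥ 1 and λ > 0 there exists a constant C > 0, depending only on φ, λ and d, such that for all R > 0 and all (t,x) ∈ Q_R the estimate |Δ_x φ_R(t,x)| ≤ C R^{−2} (φ_R^*(t,x))^{λ/(λ+2)} holds, where Δ_x denotes the Laplacian in the space variable x. -/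
open MeasureTheory Real Set

noncomputable section

lemma norm_hasFDerivAt_aux {d : ℕ} (x : EuclideanSpace ℝ (Fin d)) (hx : x ≠ 0) :
    HasFDerivAt (fun y : EuclideanSpace ℝ (Fin d) => ‖y‖) (‖x‖⁻¹ • innerSL ℝ x) x := by
  have hn : ‖x‖ ≠ 0 := norm_ne_zero_iff.mpr hx
  have h := (hasStrictFDerivAt_norm_sq x).hasFDerivAt.sqrt (by positivity)
  have h2 : (fun y : EuclideanSpace ℝ (Fin d) => √(‖y‖ ^ 2)) = fun y => ‖y‖ := by
    funext y; exact Real.sqrt_sq (norm_nonneg y)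
  rw [h2] at h
  have h3 : (1 / (2 * √(‖x‖ ^ 2))) • (2 • innerSL ℝ x) = ‖x‖⁻¹ • innerSL ℝ x := by
    rw [Real.sqrt_sq (norm_nonneg x)]
    ext v
    simp
    field_simp
  rw [← h3]
  exact h

lemma lap_radial {d : ℕ} (G G1 : ℝ → ℝ) (G2 : ℝ) (x : EuclideanSpace ℝ (Fin d)) (hx : x ≠ 0)
    (hG : ∀ s, HasDerivAt G (G1 s) s) (hG1 : HasDerivAt G1 G2 ‖x‖) :
    lap (fun y => G ‖y‖) x = G2 + ((d : ℝ) - 1) * (G1 ‖x‖ / ‖x‖) := by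
  have hn : ‖x‖ ≠ 0 := norm_ne_zero_iff.mpr hx
  have h1 : ∀ y : EuclideanSpace ℝ (Fin d), y ≠ 0 →
      HasFDerivAt (fun y => G ‖y‖) ((G1 ‖y‖ / ‖y‖) • innerSL ℝ y) y := by
    intro y hy
    have := (hG ‖y‖).comp_hasFDerivAt y (norm_hasFDerivAt_aux y hy)
    rw [smul_smul, ← div_eq_mul_inv] at this
    exact this
  have h2 : fderiv ℝ (fun y : EuclideanSpace ℝ (Fin d) => G ‖y‖) =ᶠ[nhds x]
      fun y => (G1 ‖y‖ / ‖y‖) • innerSL ℝ y := by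
    filter_upwards [isOpen_ne.mem_nhds hx] with y hy
    exact (h1 y hy).fderiv
  have h3 : HasDerivAt (fun s => G1 s / s) ((G2 * ‖x‖ - G1 ‖x‖ * 1) / ‖x‖ ^ 2) ‖x‖ :=
    hG1.div (hasDerivAt_id _) hn
  have h4 := h3.comp_hasFDerivAt x (norm_hasFDerivAt_aux x hx)
  have h5 := h4.smul (innerSL ℝ (E := EuclideanSpace ℝ (Fin d))).hasFDerivAt
  have h6 : fderiv ℝ (fderiv ℝ (fun y : EuclideanSpace ℝ (Fin d) => G ‖y‖)) x = _ :=
    (h2.fderiv_eq).trans h5.fderiv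
  unfold lap
  have h7 : ∀ i : Fin d, iteratedFDeriv ℝ 2 (fun y : EuclideanSpace ℝ (Fin d) => G ‖y‖) x
      ![EuclideanSpace.single i 1, EuclideanSpace.single i 1] =
      G1 ‖x‖ / ‖x‖ + ((G2 * ‖x‖ - G1 ‖x‖ * 1) / ‖x‖ ^ 2 / ‖x‖) * (x i) ^ 2 := by
    intro i
    rw [iteratedFDeriv_two_apply, h6]
    have i1 : inner ℝ (EuclideanSpace.single i (1 : ℝ)) (EuclideanSpace.single i (1 : ℝ)) = 1 := by
      simp
    have i2 : inner ℝ x (EuclideanSpace.single i (1 : ℝ)) = x i := by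
      simp [EuclideanSpace.inner_single_right]
    change (G1 ‖x‖ / ‖x‖) *
        inner ℝ (EuclideanSpace.single i (1 : ℝ)) (EuclideanSpace.single i (1 : ℝ)) +
      ((G2 * ‖x‖ - G1 ‖x‖ * 1) / ‖x‖ ^ 2 * (‖x‖⁻¹ * inner ℝ x (EuclideanSpace.single i (1 : ℝ)))) *
        inner ℝ x (EuclideanSpace.single i (1 : ℝ)) = _
    rw [i1, i2]
    ring
  rw [Finset.sum_congr rfl (fun i _ => h7 i), Finset.sum_add_distrib, ← Finset.mul_sum,
    ← EuclideanSpace.real_norm_sq_eq]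
  simp
  field_simp
  ring

/-- Bounds for the derivatives of the power of the cutoff. -/
lemma cutoff_pow (lam : ℝ) (hlam : 0 < lam) (φ : ℝ → ℝ) (hφ : CutoffHyp φ) :
    ∃ K > (0 : ℝ), ∃ F1 F2 : ℝ → ℝ,
      (∀ s, HasDerivAt (fun s => φ s ^ (lam + 2)) (F1 s) s) ∧ (∀ s, HasDerivAt F1 (F2 s) s) ∧
      ∀ s, 0 < s → s < 1 → |F1 s| ≤ K * phiStar φ s ^ lam ∧ |F2 s| ≤ K * phiStar φ s ^ lam := by
  obtain ⟨hs, h01, hone, -, -⟩ := hφ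
  have hd0 : ContDiff ℝ 2 φ := contDiff_infty.mp hs 2
  have hd1 : ContDiff ℝ 1 (deriv φ) := by
    have : ContDiff ℝ (1 + 1) φ := by norm_num; exact hd0
    exact (contDiff_succ_iff_deriv.mp this).2.2
  have hc2 : Continuous (deriv (deriv φ)) := hd1.continuous_deriv (le_refl _)
  have hφ1 : ∀ s, HasDerivAt φ (deriv φ s) s := fun s =>
    (hd0.differentiable (by norm_num) s).hasDerivAt
  have hφ2 : ∀ s, HasDerivAt (deriv φ) (deriv (deriv φ) s) s := fun s =>
    (hd1.differentiable (by norm_num) s).hasDerivAt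
  obtain ⟨A, hA⟩ := isCompact_Icc (a := (0:ℝ)) (b := 1) |>.exists_bound_of_continuousOn
    hd1.continuous.continuousOn
  obtain ⟨B, hB⟩ := isCompact_Icc (a := (0:ℝ)) (b := 1) |>.exists_bound_of_continuousOn
    hc2.continuousOn
  have hA0 : 0 ≤ A := (norm_nonneg _).trans (hA 0 (by simp))
  have hB0 : 0 ≤ B := (norm_nonneg _).trans (hB 0 (by simp))
  refine ⟨(lam + 2) * A + (lam + 2) * ((lam + 1) * A ^ 2 + B) + 1, by positivity,
    fun s => deriv φ s * (lam + 2) * φ s ^ (lam + 1),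
    fun s => deriv (deriv φ) s * (lam + 2) * φ s ^ (lam + 1) +
      deriv φ s * (lam + 2) * (deriv φ s * (lam + 1) * φ s ^ lam), ?_, ?_, ?_⟩
  · intro s
    have := (hφ1 s).rpow_const (p := lam + 2) (Or.inr (by linarith))
    rwa [show lam + 2 - 1 = lam + 1 by ring] at this
  · intro s
    have := (hφ1 s).rpow_const (p := lam + 1) (Or.inr (by linarith))
    rw [show lam + 1 - 1 = lam by ring] at this
    exact ((hφ2 s).mul_const _).mul this
  · intro s hs0 hs1
    by_cases h : s < 1 / 2
    · have e0 : φ =ᶠ[nhds s] fun _ => 1 := by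
        filter_upwards [Ioo_mem_nhds hs0 h] with y hy
        exact hone y ⟨hy.1.le, hy.2.le⟩
      have e1 : deriv φ =ᶠ[nhds s] fun _ => 0 := by
        have := e0.deriv
        simpa using this
      have z1 : deriv φ s = 0 := e1.eq_of_nhds
      have z2 : deriv (deriv φ) s = 0 := by rw [e1.deriv_eq]; simp
      have hst : phiStar φ s = 0 := if_pos h
      simp [z1, z2, hst, Real.zero_rpow hlam.ne']
    · have hst : phiStar φ s = φ s := if_neg h
      rw [hst]
      have hp : 0 ≤ φ s ^ lam := Real.rpow_nonneg (h01 s).1 _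
      have hq : 0 ≤ φ s ^ (lam + 1) := Real.rpow_nonneg (h01 s).1 _
      have hpq : φ s ^ (lam + 1) ≤ φ s ^ lam := by
        rw [Real.rpow_add_one' (h01 s).1 (by linarith)]
        exact mul_le_of_le_one_right hp (h01 s).2
      have a := hA s ⟨hs0.le, hs1.le⟩
      have b := hB s ⟨hs0.le, hs1.le⟩
      rw [Real.norm_eq_abs] at a b
      have l2 : |lam + 2| = lam + 2 := abs_of_pos (by linarith)
      have l1 : |lam + 1| = lam + 1 := abs_of_pos (by linarith)
      have t1 : |deriv φ s * (lam + 2) * φ s ^ (lam + 1)| ≤ A * (lam + 2) * φ s ^ lam := by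
        rw [abs_mul, abs_mul, l2, abs_of_nonneg hq]
        gcongr
      have t2 : |deriv (deriv φ) s * (lam + 2) * φ s ^ (lam + 1)| ≤ B * (lam + 2) * φ s ^ lam := by
        rw [abs_mul, abs_mul, l2, abs_of_nonneg hq]
        gcongr
      have t3 : |deriv φ s * (lam + 2) * (deriv φ s * (lam + 1) * φ s ^ lam)| ≤
          A * (lam + 2) * (A * (lam + 1) * φ s ^ lam) := by
        rw [abs_mul, abs_mul, abs_mul, abs_mul, l2, l1, abs_of_nonneg hp]
        gcongr
      have p1 : 0 ≤ A * (lam + 2) * φ s ^ lam := by positivity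
      have p2 : 0 ≤ B * (lam + 2) * φ s ^ lam := by positivity
      have p3 : 0 ≤ A * (lam + 2) * (A * (lam + 1) * φ s ^ lam) := by positivity
      refine ⟨?_, (abs_add_le _ _).trans ?_⟩ <;> nlinarith

theorem phiR_laplacian_est (d : ℕ) (hd : 1 ≤ d) (lam : ℝ) (hlam : 0 < lam)
    (φ : ℝ → ℝ) (hφ : CutoffHyp φ) :
    ∃ C > (0 : ℝ), ∀ R > (0 : ℝ), ∀ (t : ℝ) (x : EuclideanSpace ℝ (Fin d)),
      0 < t → 1 < ‖x‖ → t ^ 2 + (‖x‖ - 1) ^ 4 < R ^ 4 →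
      |lap (fun y => phiR φ lam R t y) x|
        ≤ C * R ^ (-2 : ℝ) * phiRStar φ lam R t x ^ (lam / (lam + 2)) := by
  obtain ⟨K, hK, F1, F2, hF, hF1, hb⟩ := cutoff_pow lam hlam φ hφ
  refine ⟨K * (28 + 4 * d), by positivity, ?_⟩
  intro R hR t x ht hx hQ
  have hx0 : x ≠ 0 := by
    rintro rfl
    simp at hx
    linarith
  have hρ : ∀ s : ℝ, HasDerivAt (fun s => (t ^ 2 + (s - 1) ^ 4) / R ^ 4)
      (4 * (s - 1) ^ 3 / R ^ 4) s := by
    intro s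
    have := ((((hasDerivAt_id s).sub_const 1).pow 4).const_add (t ^ 2)).div_const (R ^ 4)
    simpa using this
  have hρ2 : ∀ s : ℝ, HasDerivAt (fun s => 4 * (s - 1) ^ 3 / R ^ 4)
      (12 * (s - 1) ^ 2 / R ^ 4) s := by
    intro s
    have := ((((hasDerivAt_id s).sub_const 1).pow 3).const_mul 4).div_const (R ^ 4)
    refine HasDerivAt.congr_deriv this ?_
    simp
    ring
  have hG : ∀ s : ℝ, HasDerivAt (fun s => φ ((t ^ 2 + (s - 1) ^ 4) / R ^ 4) ^ (lam + 2))
      (F1 ((t ^ 2 + (s - 1) ^ 4) / R ^ 4) * (4 * (s - 1) ^ 3 / R ^ 4)) s := fun s =>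
    (hF _).comp s (hρ s)
  have hG1 := ((hF1 _).comp ‖x‖ (hρ ‖x‖)).mul (hρ2 ‖x‖)
  have key := lap_radial _ _ _ x hx0 hG hG1
  have e : (fun y => phiR φ lam R t y) =
    fun y : EuclideanSpace ℝ (Fin d) => φ ((t ^ 2 + (‖y‖ - 1) ^ 4) / R ^ 4) ^ (lam + 2) := rfl
  rw [e, key]
  unfold phiRStar
  simp only [Function.comp_apply]
  set u := ‖x‖ - 1 with hu
  have hu0 : 0 < u := by linarith
  have hxu : ‖x‖ = u + 1 := by linarith
  set ρ := (t ^ 2 + u ^ 4) / R ^ 4 with hρd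
  have hρ0 : 0 < ρ := by positivity
  have hρ1 : ρ < 1 := by rw [hρd, div_lt_one (by positivity)]; exact hQ
  obtain ⟨b1, b2⟩ := hb ρ hρ0 hρ1
  have hst0 : 0 ≤ phiStar φ ρ := by
    unfold phiStar
    split_ifs
    · exact le_rfl
    · exact (hφ.2.1 ρ).1
  rw [← Real.rpow_mul hst0, show (lam + 2) * (lam / (lam + 2)) = lam by field_simp]
  set P := K * phiStar φ ρ ^ lam with hP
  have hP0 : 0 ≤ P := by positivity
  have huR : u ≤ R := by
    have : u ^ 4 ≤ R ^ 4 := by nlinarith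
    exact le_of_pow_le_pow_left₀ (by norm_num) hR.le this
  have hR2 : R ^ (-2 : ℝ) = 1 / R ^ 2 := by
    rw [Real.rpow_neg hR.le]; norm_num
  rw [hR2]
  have c1 : 4 * u ^ 3 / R ^ 4 * (4 * u ^ 3 / R ^ 4) ≤ 16 * (1 / R ^ 2) := by
    calc 4 * u ^ 3 / R ^ 4 * (4 * u ^ 3 / R ^ 4)
        ≤ 4 * R ^ 3 / R ^ 4 * (4 * R ^ 3 / R ^ 4) := by gcongr
      _ = _ := by field_simp; norm_num
  have c2 : 12 * u ^ 2 / R ^ 4 ≤ 12 * (1 / R ^ 2) := by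
    calc 12 * u ^ 2 / R ^ 4 ≤ 12 * R ^ 2 / R ^ 4 := by gcongr
      _ = _ := by field_simp
  have c3 : 4 * u ^ 3 / R ^ 4 / ‖x‖ ≤ 4 * (1 / R ^ 2) := by
    calc 4 * u ^ 3 / R ^ 4 / ‖x‖ ≤ 4 * u ^ 3 / R ^ 4 / u := by
          apply div_le_div_of_nonneg_left (by positivity) hu0 (by linarith)
      _ = 4 * u ^ 2 / R ^ 4 := by field_simp
      _ ≤ 4 * R ^ 2 / R ^ 4 := by gcongr
      _ = _ := by field_simp
  have hd1 : (0 : ℝ) ≤ (d : ℝ) - 1 := by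
    have : (1 : ℝ) ≤ d := by exact_mod_cast hd
    linarith
  have e1 : |F2 ρ * (4 * u ^ 3 / R ^ 4) * (4 * u ^ 3 / R ^ 4)| ≤ P * (16 * (1 / R ^ 2)) := by
    rw [mul_assoc, abs_mul, abs_of_nonneg (a := 4 * u ^ 3 / R ^ 4 * (4 * u ^ 3 / R ^ 4)) (by positivity)]
    gcongr
  have e2 : |F1 ρ * (12 * u ^ 2 / R ^ 4)| ≤ P * (12 * (1 / R ^ 2)) := by
    rw [abs_mul, abs_of_nonneg (a := 12 * u ^ 2 / R ^ 4) (by positivity)]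
    gcongr
  have e3 : |((d : ℝ) - 1) * (F1 ρ * (4 * u ^ 3 / R ^ 4) / ‖x‖)| ≤
      d * (P * (4 * (1 / R ^ 2))) := by
    rw [mul_div_assoc, abs_mul, abs_mul, abs_of_nonneg hd1,
      abs_of_nonneg (a := 4 * u ^ 3 / R ^ 4 / ‖x‖) (by positivity)]
    gcongr
    linarith
  calc _ ≤ _ := (abs_add_le _ _).trans (add_le_add_left (abs_add_le _ _) _)
    _ ≤ P * (16 * (1 / R ^ 2)) + P * (12 * (1 / R ^ 2)) + d * (P * (4 * (1 / R ^ 2))) :=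
        add_le_add (add_le_add e1 e2) e3
    _ = _ := by rw [hP]; ring
end
end
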